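/- Let H be cocommutative. Every unital algebra homomorphism a: H → Z(A)^H (into the H-invariant central elements) belongs to GL(H, A), its convolution inverse is a⁻¹(g) = a(S(g)), and these homomorphisms form a subgroup of GL(H, A). If a is moreover a *-homomorphism, then a ∈ U(H, A). -/

import Mathlib

open scoped TensorProduct

/-- A choice of a finite "Sweedler representation" of the comultiplication:
`Δ g = ∑ₚ p.1 ⊗ p.2` where `p` ranges over the list `rep g`. -/
structure SweedlerRep (C H : Type*) [CommSemiring C] [AddCommMonoid H] [Module C H]
    [CoalgebraStruct C H] where
  rep : H → List (H × H)
  rep_spec : ∀ g : H,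
    Coalgebra.comul (R := C) g = ((rep g).map fun p => p.1 ⊗ₜ[C] p.2).sum

section GLGroup

variable {C H A : Type*} [CommRing C] [StarRing C]
  [Ring H] [HopfAlgebra C H] [StarRing H] [StarModule C H]
  [Ring A] [Algebra C A] [StarRing A] [StarModule C A]

/-- The convolution product on `Hom(H, A)`: `(a * b)(g) = a(g₍₁₎) b(g₍₂₎)`. -/
def conv (Δ : SweedlerRep C H) (a b : H → A) : H → A :=
  fun g => ((Δ.rep g).map fun p => a p.1 * b p.2).sum

/-- The convolution unit `e(g) = ε(g)·1`. -/
def convUnit (C : Type*) {H : Type*} [CommRing C] [AddCommGroup H] [Module C H]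
    [CoalgebraStruct C H] (A : Type*) [Ring A] [Algebra C A] : H → A :=
  fun g => Coalgebra.counit (R := C) g • (1 : A)

/-- Membership in `GL(H, A)`: a `C`-linear map `a : H → A` with (i) normalization
`a(1) = 1`, (ii) action condition `a(gh) = a(g₍₁₎)(g₍₂₎ ▷ a(h))` and (iii) module
condition `(g₍₁₎ ▷ b) a(g₍₂₎) = a(g₍₁₎)(g₍₂₎ ▷ b)`. -/
def memGL (Δ : SweedlerRep C H) (act : H → A → A) (a : H → A) : Prop :=
  IsLinearMap C a ∧ a 1 = 1 ∧
  (∀ g h : H, a (g * h) = ((Δ.rep g).map fun p => a p.1 * act p.2 (a h)).sum) ∧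
  (∀ (g : H) (b : A),
    ((Δ.rep g).map fun p => act p.1 b * a p.2).sum
      = ((Δ.rep g).map fun p => a p.1 * act p.2 b).sum)

/-- The convolution inverse formula `a⁻¹(g) = g₍₂₎ ▷ a(S⁻¹(g₍₁₎))`. -/
def convInv (Δ : SweedlerRep C H) (act : H → A → A) (Sinv : H → H) (a : H → A) : H → A :=
  fun g => ((Δ.rep g).map fun p => act p.2 (a (Sinv p.1))).sum

end GLGroup


/-- Membership in `U(H, A)`: an element of `GL(H, A)` satisfying the unitarity condition
`a(g₍₁₎)(a(S(g₍₂₎)*))* = ε(g)·1`. -/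
def memU {C H A : Type*} [CommRing C] [StarRing C]
    [Ring H] [HopfAlgebra C H] [StarRing H] [StarModule C H]
    [Ring A] [Algebra C A] [StarRing A] [StarModule C A]
    (Δ : SweedlerRep C H) (act : H → A → A) (a : H → A) : Prop :=
  memGL Δ act a ∧
  ∀ g : H,
    ((Δ.rep g).map fun p =>
        a p.1 * star (a (star (HopfAlgebra.antipode (R := C) p.2)))).sum
      = Coalgebra.counit (R := C) g • (1 : A)

/-- A unital algebra homomorphism from `H` into the `H`-invariant central elements
`Z(A)^H` of `A`. -/
def IsInvCentralHom (C : Type*) {H A : Type*} [CommRing C] [StarRing C]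
    [Ring H] [HopfAlgebra C H] [StarRing H] [StarModule C H]
    [Ring A] [Algebra C A] [StarRing A] [StarModule C A]
    (act : H → A → A) (a : H → A) : Prop :=
  IsLinearMap C a ∧ a 1 = 1 ∧ (∀ g h : H, a (g * h) = a g * a h) ∧
  (∀ (g : H) (b : A), a g * b = b * a g) ∧
  (∀ g h : H, act h (a g) = Coalgebra.counit (R := C) h • a g)

section SweedlerSums

open HopfAlgebra Coalgebra

namespace SweedlerRep

variable {C H M : Type*} [CommRing C] [Ring H] [HopfAlgebra C H] [AddCommGroup M] [Module C M]

lemma sum_map_eq (Δ : SweedlerRep C H) (T : H ⊗[C] H →ₗ[C] M) (g : H) :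
    ((Δ.rep g).map fun p => T (p.1 ⊗ₜ[C] p.2)).sum = T (comul g) := by
  rw [Δ.rep_spec g, map_list_sum, List.map_map]
  rfl

lemma sum_counit_smul_right (Δ : SweedlerRep C H) (f : H →ₗ[C] M) (g : H) :
    ((Δ.rep g).map fun p => counit (R := C) p.1 • f p.2).sum = f g := by
  simpa using Δ.sum_map_eq (f ∘ₗ (TensorProduct.lid C H).toLinearMap ∘ₗ counit.rTensor H) g

lemma sum_counit_smul_left (Δ : SweedlerRep C H) (f : H →ₗ[C] M) (g : H) :
    ((Δ.rep g).map fun p => counit (R := C) p.2 • f p.1).sum = f g := by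
  simpa using Δ.sum_map_eq (f ∘ₗ (TensorProduct.rid C H).toLinearMap ∘ₗ counit.lTensor H) g

lemma sum_mul_antipode (Δ : SweedlerRep C H) (f : H →ₗ[C] M) (g : H) :
    ((Δ.rep g).map fun p => f (p.1 * antipode C p.2)).sum = counit (R := C) g • f 1 := by
  simpa [Algebra.algebraMap_eq_smul_one] using
    Δ.sum_map_eq (f ∘ₗ LinearMap.mul' C H ∘ₗ (antipode C).lTensor H) g

lemma sum_antipode_mul (Δ : SweedlerRep C H) (f : H →ₗ[C] M) (g : H) :
    ((Δ.rep g).map fun p => f (antipode C p.1 * p.2)).sum = counit (R := C) g • f 1 := by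
  simpa [Algebra.algebraMap_eq_smul_one] using
    Δ.sum_map_eq (f ∘ₗ LinearMap.mul' C H ∘ₗ (antipode C).rTensor H) g

/-- Under cocommutativity the two legs of the comultiplication may be exchanged. -/
lemma sum_map_swap (Δ : SweedlerRep C H)
    (hcocom : ∀ g : H, comul (R := C) g = ((Δ.rep g).map fun p => p.2 ⊗ₜ[C] p.1).sum)
    (T : H ⊗[C] H →ₗ[C] M) (g : H) :
    ((Δ.rep g).map fun p => T (p.2 ⊗ₜ[C] p.1)).sum
      = ((Δ.rep g).map fun p => T (p.1 ⊗ₜ[C] p.2)).sum := by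
  rw [Δ.sum_map_eq, hcocom g, map_list_sum, List.map_map]
  rfl

end SweedlerRep

end SweedlerSums

namespace IsInvCentralHom

open HopfAlgebra Coalgebra

variable {C H A : Type*} [CommRing C] [StarRing C]
  [Ring H] [HopfAlgebra C H] [StarRing H] [StarModule C H]
  [Ring A] [Algebra C A] [StarRing A] [StarModule C A]
  {act : H → A → A} {a b : H → A}

/-- The algebra homomorphism `H →ₐ[C] A` underlying a homomorphism into `Z(A)^H`. -/
def toAlgHom (ha : IsInvCentralHom C act a) : H →ₐ[C] A :=
  AlgHom.ofLinearMap (ha.1.mk' a) ha.2.1 ha.2.2.1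

@[simp]
lemma toAlgHom_apply (ha : IsInvCentralHom C act a) (g : H) : ha.toAlgHom g = a g := rfl

theorem memGL (ha : IsInvCentralHom C act a) (Δ : SweedlerRep C H)
    (hcocom : ∀ g : H, comul (R := C) g = ((Δ.rep g).map fun p => p.2 ⊗ₜ[C] p.1).sum)
    (hact_lin : ∀ x : A, IsLinearMap C fun g => act g x) : memGL Δ act a := by
  obtain ⟨hlin, hone, hmul, hcentral, hinv⟩ := id ha
  refine ⟨hlin, hone, fun g h => ?_, fun g x => ?_⟩
  · have key := Δ.sum_counit_smul_left
      ((LinearMap.mulRight C (a h)) ∘ₗ ha.toAlgHom.toLinearMap) g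
    simpa [hmul, hinv] using key.symm
  · have key := Δ.sum_map_swap hcocom
      (LinearMap.mul' C A ∘ₗ TensorProduct.map ha.toAlgHom.toLinearMap ((hact_lin x).mk' _)) g
    simpa [hcentral] using key

theorem conv_antipode (ha : IsInvCentralHom C act a) (Δ : SweedlerRep C H) :
    conv Δ a (fun g => a (antipode C g)) = convUnit C A := by
  funext g
  simpa [conv, convUnit, ha.2.1, ha.2.2.1] using Δ.sum_mul_antipode ha.toAlgHom.toLinearMap g

theorem antipode_conv (ha : IsInvCentralHom C act a) (Δ : SweedlerRep C H) :
    conv Δ (fun g => a (antipode C g)) a = convUnit C A := by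
  funext g
  simpa [conv, convUnit, ha.2.1, ha.2.2.1] using Δ.sum_antipode_mul ha.toAlgHom.toLinearMap g

theorem convUnit (hact_linA : ∀ g : H, IsLinearMap C (act g))
    (hact_unit : ∀ g : H, act g (1 : A) = counit (R := C) g • (1 : A)) :
    IsInvCentralHom C act (convUnit C A) := by
  refine ⟨⟨fun g h => ?_, fun c g => ?_⟩, ?_, fun g h => ?_, fun g x => ?_, fun g h => ?_⟩
  · simp [_root_.convUnit, add_smul]
  · simp [_root_.convUnit, mul_smul]
  · simp [_root_.convUnit]
  · simp [_root_.convUnit, smul_smul, mul_comm]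
  · simp [_root_.convUnit]
  · simp [_root_.convUnit, (hact_linA h).map_smul, hact_unit, smul_smul, mul_comm]

/-- The algebra homomorphism whose underlying map is the convolution product of two
homomorphisms into `Z(A)^H`. -/
def convAlgHom (ha : IsInvCentralHom C act a) (hb : IsInvCentralHom C act b) : H →ₐ[C] A :=
  (Algebra.TensorProduct.lift ha.toAlgHom hb.toAlgHom fun g _ => ha.2.2.2.1 g _).comp
    (Bialgebra.comulAlgHom C H)

lemma convAlgHom_apply (ha : IsInvCentralHom C act a) (hb : IsInvCentralHom C act b)
    (Δ : SweedlerRep C H) (g : H) : ha.convAlgHom hb g = conv Δ a b g :=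
  (Δ.sum_map_eq (Algebra.TensorProduct.lift ha.toAlgHom hb.toAlgHom
    fun g _ => ha.2.2.2.1 g _).toLinearMap g).symm

theorem conv (ha : IsInvCentralHom C act a) (hb : IsInvCentralHom C act b)
    (Δ : SweedlerRep C H) (hact_linA : ∀ g : H, IsLinearMap C (act g))
    (hact_alg : ∀ (g : H) (x y : A), act g (x * y) =
      ((Δ.rep g).map fun p => act p.1 x * act p.2 y).sum) :
    IsInvCentralHom C act (conv Δ a b) := by
  have hact_mul (h g k : H) : act h (a g * b k) = counit (R := C) h • (a g * b k) := by
    have key := Δ.sum_counit_smul_right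
      ((LinearMap.toSpanSingleton C A (a g * b k)) ∘ₗ counit) h
    simpa [hact_alg, ha.2.2.2.2, hb.2.2.2.2, smul_smul, mul_comm] using key
  have hconv : _root_.conv Δ a b = ha.convAlgHom hb :=
    funext fun g => (ha.convAlgHom_apply hb Δ g).symm
  refine ⟨?_, ?_, fun g h => ?_, fun g x => ?_, fun g h => ?_⟩
  · exact hconv ▸ (ha.convAlgHom hb).toLinearMap.isLinear
  · rw [hconv, map_one]
  · rw [hconv, map_mul]
  · simp only [_root_.conv]
    rw [← List.sum_map_mul_right, ← List.sum_map_mul_left]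
    congr 2
    funext p
    rw [mul_assoc, hb.2.2.2.1, ← mul_assoc, ha.2.2.2.1, mul_assoc]
  · have hsum := map_list_sum ((hact_linA h).mk' _) ((Δ.rep g).map fun p => a p.1 * b p.2)
    simpa [_root_.conv, Function.comp_def, hact_mul, List.smul_sum] using hsum

theorem antipode (ha : IsInvCentralHom C act a) :
    IsInvCentralHom C act (fun g => a (antipode C g)) := by
  obtain ⟨-, hone, hmul, hcentral, hinv⟩ := id ha
  refine ⟨(ha.toAlgHom.toLinearMap ∘ₗ HopfAlgebra.antipode C).isLinear, ?_, fun g h => ?_,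
    fun g => hcentral _, fun g => hinv _⟩
  · simp [hone]
  · beta_reduce
    rw [antipode_mul_antidistrib, hmul, hcentral]

theorem memU (ha : IsInvCentralHom C act a) (Δ : SweedlerRep C H)
    (hcocom : ∀ g : H, comul (R := C) g = ((Δ.rep g).map fun p => p.2 ⊗ₜ[C] p.1).sum)
    (hact_lin : ∀ x : A, IsLinearMap C fun g => act g x)
    (hstar : ∀ g : H, a (star g) = star (a g)) : memU Δ act a := by
  refine ⟨ha.memGL Δ hcocom hact_lin, fun g => ?_⟩
  simp only [hstar, star_star]
  exact congrFun (ha.conv_antipode Δ) g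

end IsInvCentralHom

/-- Let `H` be cocommutative. Every unital algebra homomorphism
`a : H → Z(A)^H` belongs to `GL(H, A)`, its convolution inverse is `a⁻¹(g) = a(S(g))`,
and these homomorphisms form a subgroup of `GL(H, A)`.  If `a` is moreover a
`*`-homomorphism, then `a ∈ U(H, A)`. -/
theorem invCentralHom_memGL
    {C H A : Type*} [CommRing C] [StarRing C]
    [Ring H] [HopfAlgebra C H] [StarRing H] [StarModule C H]
    [Ring A] [Algebra C A] [StarRing A] [StarModule C A]
    (Δ : SweedlerRep C H)
    -- `H` is cocommutative: `Δ = Δ^op`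
    (hcocom : ∀ g : H, Coalgebra.comul (R := C) g
      = ((Δ.rep g).map fun p => p.2 ⊗ₜ[C] p.1).sum)
    -- `act` is a `*`-action of `H` on the unital `*`-algebra `A`
    (act : H → A → A)
    (hact_one : ∀ a, act 1 a = a)
    (hact_mulH : ∀ g h a, act (g * h) a = act g (act h a))
    (hact_lin : ∀ a : A, IsLinearMap C fun g => act g a)
    (hact_linA : ∀ g : H, IsLinearMap C (act g))
    (hact_alg : ∀ (g : H) (a b : A), act g (a * b) =
      ((Δ.rep g).map fun p => act p.1 a * act p.2 b).sum)
    (hact_star : ∀ g a, star (act g a) =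
      act (star (HopfAlgebra.antipode (R := C) g)) (star a))
    (hact_unit : ∀ g : H, act g (1 : A) = Coalgebra.counit (R := C) g • (1 : A)) :
    -- every unital algebra homomorphism into `Z(A)^H` belongs to `GL(H, A)` ...
    (∀ a : H → A, IsInvCentralHom C act a → memGL Δ act a) ∧
    -- ... with convolution inverse `a⁻¹(g) = a(S(g))` ...
    (∀ a : H → A, IsInvCentralHom C act a →
      conv Δ a (fun g => a (HopfAlgebra.antipode (R := C) g)) = convUnit C A ∧
      conv Δ (fun g => a (HopfAlgebra.antipode (R := C) g)) a = convUnit C A) ∧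
    -- ... and these homomorphisms form a subgroup of `GL(H, A)`:
    IsInvCentralHom C act (convUnit C A) ∧
    (∀ a b : H → A, IsInvCentralHom C act a → IsInvCentralHom C act b →
      IsInvCentralHom C act (conv Δ a b)) ∧
    (∀ a : H → A, IsInvCentralHom C act a →
      IsInvCentralHom C act (fun g => a (HopfAlgebra.antipode (R := C) g))) ∧
    -- if `a` is moreover a `*`-homomorphism then `a ∈ U(H, A)`
    (∀ a : H → A, IsInvCentralHom C act a → (∀ g : H, a (star g) = star (a g)) →
      memU Δ act a) := by
  exact ⟨fun a ha => ha.memGL Δ hcocom hact_lin,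
    fun a ha => ⟨ha.conv_antipode Δ, ha.antipode_conv Δ⟩,
    IsInvCentralHom.convUnit hact_linA hact_unit,
    fun a b ha hb => ha.conv hb Δ hact_linA hact_alg,
    fun a ha => ha.antipode,
    fun a ha hstar => ha.memU Δ hcocom hact_lin hstar⟩
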